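/- Let P = {(x, y, z) ∈ ℝ³ : x ≥ 0, y ≥ 0, z ≥ 0, −x + (5/2)z + 1 ≥ 0, −(1/2)x − y + (1/4)z + 1 ≥ 0, −(1/4)x − y − (7/8)z + 1 ≥ 0} and let S be the convex hull of the six points s_1 = (3/4, 1/8, 0), s_2 = (3/4, 1/2, 0), s_3 = (3/11, 17/22, 0), s_4 = (2, 0, 1/2), s_5 = (1/2, 0, 3/4), s_6 = (1/6, 0, 7/12). Then (i) there exist five points q_1, …, q_5 ∈ ℝ³ with S ⊆ conv{q_1, …, q_5} ⊆ P; (ii) for any five points q_1, …, q_5 ∈ ℝ³ with S ⊆ conv{q_1, …, q_5} ⊆ P, one of the q_i equals (2 − √2, 0, 0); in particular there is no choice of five rational points q_1, …, q_5 ∈ ℚ³ with S ⊆ conv{q_1, …, q_5} ⊆ P; and (iii) there is no choice of four points q_1, …, q_4 ∈ ℝ³ with S ⊆ conv{q_1, …, q_4} ⊆ P. -/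

import Mathlib

open Set

/-- The outer polytope `P ⊆ ℝ³` of the nested polytope instance. -/
def outerP : Set (Fin 3 → ℝ) :=
  {x | 0 ≤ x 0 ∧ 0 ≤ x 1 ∧ 0 ≤ x 2 ∧
       0 ≤ -x 0 + (5 / 2) * x 2 + 1 ∧
       0 ≤ -(1 / 2) * x 0 - x 1 + (1 / 4) * x 2 + 1 ∧
       0 ≤ -(1 / 4) * x 0 - x 1 - (7 / 8) * x 2 + 1}

/-- The inner polytope `S`: the convex hull of the six given points. -/
noncomputable def innerS : Set (Fin 3 → ℝ) :=
  convexHull ℝ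
    ({![3/4, 1/8, 0], ![3/4, 1/2, 0], ![3/11, 17/22, 0],
      ![2, 0, 1/2], ![1/2, 0, 3/4], ![1/6, 0, 7/12]} : Set (Fin 3 → ℝ))

theorem sepW {ι : Type*} [Fintype ι] (w z f y : ι → ℝ) (hw : ∀ i, 0 ≤ w i) (hz : ∀ i, 0 ≤ z i)
    (hzs : ∑ i, w i * z i = 0) (hf : ∑ i, w i * f i ≤ 0) (hy : 0 < ∑ i, w i * y i)
    (h1 : ∀ i, z i = 0 → 0 < y i → 0 < f i) (h2 : ∀ i, z i = 0 → y i ≤ 0 → 0 ≤ f i) : False := by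
  have hwz : ∀ i, w i * z i = 0 := by
    have := (Finset.sum_eq_zero_iff_of_nonneg
      (fun i _ => mul_nonneg (hw i) (hz i))).1 hzs
    exact fun i => this i (Finset.mem_univ i)
  have hf0 : ∀ i, w i = 0 ∨ (z i = 0 ∧ 0 ≤ f i) := by
    intro i
    rcases mul_eq_zero.1 (hwz i) with h | h
    · exact Or.inl h
    · refine Or.inr ⟨h, ?_⟩
      rcases lt_or_ge 0 (y i) with h' | h'
      · exact (h1 i h h').le
      · exact h2 i h h'
  have hwf : ∀ i, 0 ≤ w i * f i := by
    intro i
    rcases hf0 i with h | h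
    · simp [h]
    · exact mul_nonneg (hw i) h.2
  have hwf0 : ∀ i, w i * f i = 0 := by
    have := (Finset.sum_eq_zero_iff_of_nonneg (fun i _ => hwf i)).1
      (le_antisymm hf (Finset.sum_nonneg fun i _ => hwf i))
    exact fun i => this i (Finset.mem_univ i)
  have : ∑ i, w i * y i ≤ 0 := by
    apply Finset.sum_nonpos
    intro i _
    rcases hf0 i with h | h
    · simp [h]
    · rcases lt_or_ge 0 (y i) with h' | h'
      · rcases mul_eq_zero.1 (hwf0 i) with h3 | h3
        · simp [h3]
        · have := h1 i h.1 h'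
          linarith
      · exact mul_nonpos_of_nonneg_of_nonpos (hw i) h'
  linarith

/-- The point with planar coordinates `(p, q)` and third coordinate `0` is in the hull. -/
def InF {ι : Type*} [Fintype ι] (X Y Z : ι → ℝ) (p q : ℝ) : Prop :=
  ∃ w : ι → ℝ, (∀ i, 0 ≤ w i) ∧ ∑ i, w i = 1 ∧ ∑ i, w i * X i = p ∧ ∑ i, w i * Y i = q ∧
    ∑ i, w i * Z i = 0

theorem affSum {ι : Type*} [Fintype ι] (w X Y : ι → ℝ) (p q α β δ : ℝ) (h1 : ∑ i, w i = 1)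
    (hX : ∑ i, w i * X i = p) (hY : ∑ i, w i * Y i = q) :
    ∑ i, w i * (α * X i + β * Y i + δ) = α * p + β * q + δ := by
  have : ∀ i, w i * (α * X i + β * Y i + δ) = α * (w i * X i) + β * (w i * Y i) + δ * w i := by
    intro i; ring
  simp_rw [this, Finset.sum_add_distrib, ← Finset.mul_sum, h1, hX, hY, mul_one]

theorem sepC {ι : Type*} [Fintype ι] {X Y Z : ι → ℝ} {p q : ℝ} (hs : InF X Y Z p q)
    (hz : ∀ i, 0 ≤ Z i) (α β δ α' β' δ' : ℝ)
    (hf : α * p + β * q + δ ≤ 0) (hy : 0 < α' * p + β' * q + δ')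
    (h1 : ∀ i, Z i = 0 → 0 < α' * X i + β' * Y i + δ' → 0 < α * X i + β * Y i + δ)
    (h2 : ∀ i, Z i = 0 → α' * X i + β' * Y i + δ' ≤ 0 → 0 ≤ α * X i + β * Y i + δ) : False := by
  obtain ⟨w, hw, hw1, hX, hY, hZ⟩ := hs
  refine sepW w Z (fun i => α * X i + β * Y i + δ) (fun i => α' * X i + β' * Y i + δ') hw hz hZ
    ?_ ?_ h1 h2
  · rw [affSum w X Y p q α β δ hw1 hX hY]; exact hf
  · rw [affSum w X Y p q α' β' δ' hw1 hX hY]; exact hy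

/-- An affine form that is nonnegative (at the point: nonpositive) on axis points must be
nonpositive at some off-axis point. -/
theorem findPt {ι : Type*} [Fintype ι] {X Y Z : ι → ℝ} {p q : ℝ} (hs : InF X Y Z p q)
    (hz : ∀ i, 0 ≤ Z i) (hY : ∀ i, 0 ≤ Y i) (hq : 0 < q) (α β δ : ℝ)
    (hf : α * p + β * q + δ ≤ 0)
    (h2 : ∀ i, Z i = 0 → Y i = 0 → 0 ≤ α * X i + δ) :
    ∃ i, Z i = 0 ∧ 0 < Y i ∧ α * X i + β * Y i + δ ≤ 0 := by
  by_contra! hc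
  refine sepC hs hz α β δ 0 1 0 hf (by linarith) ?_ ?_
  · intro i hi h
    exact hc i hi (by linarith)
  · intro i hi h
    have h0 : Y i = 0 := le_antisymm (by linarith) (hY i)
    have := h2 i hi h0
    rw [h0]; linarith

theorem affZero {ι : Type*} [Fintype ι] {X Y Z : ι → ℝ} {p q : ℝ} (hs : InF X Y Z p q)
    (hz : ∀ i, 0 ≤ Z i) (α β δ : ℝ) (h : ∀ i, Z i = 0 → α * X i + β * Y i + δ = 0) :
    α * p + β * q + δ = 0 := by
  by_contra hne
  rcases lt_or_gt_of_ne hne with h' | h'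
  · refine sepC hs hz 0 0 0 (-α) (-β) (-δ) (by linarith) (by linarith) ?_ ?_
    · intro i hi h3; have := h i hi; linarith
    · intro i hi h3; linarith
  · refine sepC hs hz 0 0 0 α β δ (by linarith) (by linarith) ?_ ?_
    · intro i hi h3; have := h i hi; linarith
    · intro i hi h3; linarith

/-- Three non-collinear points need at least three points in the face. -/
theorem third {ι : Type*} [Fintype ι] {X Y Z : ι → ℝ} {p1 q1 p2 q2 p3 q3 : ℝ}
    (hz : ∀ i, 0 ≤ Z i) (hs1 : InF X Y Z p1 q1) (hs2 : InF X Y Z p2 q2) (hs3 : InF X Y Z p3 q3)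
    (hd : (p2 - p1) * (q3 - q1) - (p3 - p1) * (q2 - q1) ≠ 0) (i j : ι)
    (hij : ∀ n, Z n = 0 → n = i ∨ n = j) : False := by
  have key : ∀ α β δ : ℝ, α * X i + β * Y i + δ = 0 → α * X j + β * Y j + δ = 0 →
      α = 0 ∧ β = 0 := by
    intro α β δ h1 h2
    have h : ∀ n, Z n = 0 → α * X n + β * Y n + δ = 0 := by
      intro n hn
      rcases hij n hn with rfl | rfl <;> assumption
    have e1 := affZero hs1 hz α β δ h
    have e2 := affZero hs2 hz α β δ h
    have e3 := affZero hs3 hz α β δ h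
    constructor
    · apply (mul_eq_zero.1 (?_ : α * _ = 0)).resolve_right hd
      linear_combination (q3 - q1) * (e2 - e1) - (q2 - q1) * (e3 - e1)
    · apply (mul_eq_zero.1 (?_ : β * _ = 0)).resolve_right hd
      linear_combination (p2 - p1) * (e3 - e1) - (p3 - p1) * (e2 - e1)
  obtain ⟨h1, h2⟩ := key (Y j - Y i) (X i - X j) (-(Y j - Y i) * X i - (X i - X j) * Y i)
    (by ring) (by ring)
  have hX : X j = X i := by linarith
  have := (key 1 0 (-X i) (by ring) (by rw [hX]; ring)).1
  norm_num at this

theorem twoA {ι : Type*} [Fintype ι] {X Y Z : ι → ℝ} (hX : ∀ i, 0 ≤ X i) (hY : ∀ i, 0 ≤ Y i)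
    (hz : ∀ i, 0 ≤ Z i) (c1 : ∀ i, Z i = 0 → X i ≤ 1)
    (c2 : ∀ i, Z i = 0 → X i / 2 + Y i ≤ 1)
    (hs2 : InF X Y Z (3/4) (1/2)) (hs3 : InF X Y Z (3/11) (17/22)) :
    ∃ i j, i ≠ j ∧ Z i = 0 ∧ 0 < Y i ∧ Z j = 0 ∧ 0 < Y j := by
  obtain ⟨i, hi, hi', hi2⟩ := findPt hs3 hz hY (by norm_num) 17 (-6) 0 (by norm_num)
    (fun i _ _ => by linarith [hX i])
  obtain ⟨j, hj, hj', hj2⟩ := findPt hs2 hz hY (by norm_num) (-2) (-1) 2 (by norm_num)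
    (fun i h _ => by linarith [c1 i h])
  refine ⟨i, j, ?_, hi, hi', hj, hj'⟩
  rintro rfl
  linarith [c1 i hi, c2 i hi, hX i]

theorem twoB {ι : Type*} [Fintype ι] {X Y Z : ι → ℝ} (hX : ∀ i, 0 ≤ X i) (hY : ∀ i, 0 ≤ Y i)
    (hz : ∀ i, 0 ≤ Z i) (c1 : ∀ i, Z i = 0 → Y i = 0 → X i ≤ 1)
    (hs4 : InF X Y Z 2 (1/2)) (hs6 : InF X Y Z (1/6) (7/12)) :
    ∃ i j, i ≠ j ∧ Z i = 0 ∧ 0 < Y i ∧ Z j = 0 ∧ 0 < Y j := by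
  obtain ⟨i, hi, hi', hi2⟩ := findPt hs4 hz hY (by norm_num) (-1/2) 1 (1/2) (by norm_num)
    (fun i h h' => by linarith [c1 i h h'])
  obtain ⟨j, hj, hj', hj2⟩ := findPt hs6 hz hY (by norm_num) (7/2) (-1) 0 (by norm_num)
    (fun i h _ => by linarith [hX i])
  refine ⟨i, j, ?_, hi, hi', hj, hj'⟩
  rintro rfl
  linarith [hX i]

theorem coreA {ι : Type*} [Fintype ι] {X Y Z : ι → ℝ} (hz : ∀ i, 0 ≤ Z i) (hX : ∀ i, 0 ≤ X i)
    (hs2 : InF X Y Z (3/4) (1/2)) (u v m : ι) (hm : Y m = 0) (hm0 : 0 ≤ X m)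
    (hm1 : X m < 3/5) (hmm : 0 < X m ^ 2 - 4 * X m + 2)
    (hn : ∀ n, Z n = 0 → n = u ∨ n = v ∨ n = m)
    (hu : X u ≤ 1) (hv : X v / 2 + Y v ≤ 1)
    (h1 : (-1/8) * X u + (3/4 - X m) * Y u + X m / 8 ≤ 0)
    (h3 : (17/22) * X v + (X m - 3/11) * Y v - (17/22) * X m ≤ 0) : False := by
  set t := X m with ht
  have gT : 0 < -(4 - 6 * t) * t + ((3 - 4 * t) / 2 + 3 * (4 - 6 * t) / 4) := by
    nlinarith [mul_pos (show 0 < 1 - t by linarith) (show 0 < 3 - 4 * t by linarith)]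
  have gU : 0 ≤ -(4 - 6 * t) * X u + (-(3 - 4 * t)) * Y u
      + ((3 - 4 * t) / 2 + 3 * (4 - 6 * t) / 4) := by
    nlinarith [mul_nonneg (show 0 ≤ 4 - 6 * t by linarith) (show 0 ≤ 1 - X u by linarith)]
  have gV : 0 < -(4 - 6 * t) * X v + (-(3 - 4 * t)) * Y v
      + ((3 - 4 * t) / 2 + 3 * (4 - 6 * t) / 4) := by
    have hμ : 0 ≤ 75 - 192 * t + 132 * t ^ 2 := by nlinarith [sq_nonneg (t - 8/11)]
    have a1 := mul_nonneg hμ (show 0 ≤ 2 - X v - 2 * Y v by linarith)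
    have a2 := mul_nonneg (show 0 ≤ 5 - 8 * t by linarith)
      (show 0 ≤ 17 * t - 17 * X v - (22 * t - 6) * Y v by linarith)
    refine pos_of_mul_pos_right (b := _) (a := 40 - 22 * t) ?_ (by linarith)
    nlinarith
  refine sepC hs2 hz (-(4 - 6 * t)) (-(3 - 4 * t)) ((3 - 4 * t) / 2 + 3 * (4 - 6 * t) / 4)
    (-1/8) (3/4 - t) (t / 8) (by linarith) (by linarith) ?_ ?_
  · intro n hn0 hpos
    rcases hn n hn0 with rfl | rfl | rfl
    · linarith
    · exact gV
    · rw [hm]; linarith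
  · intro n hn0 hpos
    rcases hn n hn0 with rfl | rfl | rfl
    · exact gU
    · exact gV.le
    · rw [hm]; linarith

theorem mainA {ι : Type*} [Fintype ι] {X Y Z : ι → ℝ} (hX : ∀ i, 0 ≤ X i) (hY : ∀ i, 0 ≤ Y i)
    (hz : ∀ i, 0 ≤ Z i) (c1 : ∀ i, Z i = 0 → X i ≤ 1)
    (c2 : ∀ i, Z i = 0 → X i / 2 + Y i ≤ 1)
    (hs1 : InF X Y Z (3/4) (1/8)) (hs2 : InF X Y Z (3/4) (1/2)) (hs3 : InF X Y Z (3/11) (17/22))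
    (i j m : ι) (hi : 0 < Y i) (hj : 0 < Y j) (hm : Y m = 0) (hmz : Z m = 0)
    (hn : ∀ n, Z n = 0 → n = i ∨ n = j ∨ n = m) : X m ^ 2 - 4 * X m + 2 ≤ 0 := by
  by_contra! hmm
  have h0 := hX m
  have h1 := c1 m hmz
  have h2 : X m < 3/5 := by nlinarith
  have hax : ∀ n, Z n = 0 → Y n = 0 → n = m := by
    intro n hn0 hy
    rcases hn n hn0 with rfl | rfl | h
    · linarith
    · linarith
    · exact h
  have hcon : ∀ n, 0 < Y n → (-1/8) * X n + (3/4 - X m) * Y n + X m / 8 ≤ 0 →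
      (17/22) * X n + (X m - 3/11) * Y n + (-(17/22) * X m) ≤ 0 → False := by
    intro n hy e1 e3
    nlinarith [mul_pos hy (show 0 < 48 - 57 * X m by linarith)]
  obtain ⟨u, hu, hu1, hu2⟩ := findPt hs1 hz hY (by norm_num) (-1/8) (3/4 - X m) (X m / 8)
    (by linarith) (fun n h h' => by rw [hax n h h']; linarith)
  obtain ⟨v, hv, hv1, hv2⟩ := findPt hs3 hz hY (by norm_num) (17/22) (X m - 3/11)
    (-(17/22) * X m) (by linarith) (fun n h h' => by rw [hax n h h']; linarith)
  have huv : u ≠ v := by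
    rintro rfl
    exact hcon u hu1 hu2 hv2
  have hum : u ≠ m := by rintro rfl; linarith
  have hvm : v ≠ m := by rintro rfl; linarith
  refine coreA hz hX hs2 u v m hm h0 h2 hmm ?_ (c1 u hu) (c2 v hv) hu2 (by linarith)
  intro n hn0
  have a := hn n hn0
  have b := hn u hu
  have c := hn v hv
  grind

theorem coreB {ι : Type*} [Fintype ι] {X Y Z : ι → ℝ} (hz : ∀ i, 0 ≤ Z i) (hX : ∀ i, 0 ≤ X i)
    (hs5 : InF X Y Z (1/2) (3/4)) (u v m : ι) (hm : Y m = 0) (hm0 : 1/2 < X m)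
    (hm1 : X m ≤ 1) (hmm : X m ^ 2 - 4 * X m + 2 < 0)
    (hn : ∀ n, Z n = 0 → n = u ∨ n = v ∨ n = m)
    (hu : 2 * X u + 7 * Y u ≤ 8)
    (h1 : (-1/2) * X u + (2 - X m) * Y u + X m / 2 ≤ 0)
    (h3 : (7/12) * X v + (X m - 1/6) * Y v + (-(7/12) * X m) ≤ 0) : False := by
  have hXv := hX v
  set t := X m with ht
  have gT : 0 < -(13 - 4 * t) * t + ((98 - 28 * t) * (3 / 4) + (13 - 4 * t) / 2) := by
    nlinarith
  have gU : 0 ≤ -(13 - 4 * t) * X u + (-(98 - 28 * t)) * Y u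
      + ((98 - 28 * t) * (3 / 4) + (13 - 4 * t) / 2) := by
    nlinarith [mul_nonneg (show 0 ≤ 10 - 2 * t by linarith)
      (show 0 ≤ 8 - 2 * X u - 7 * Y u by linarith)]
  have gV : 0 < -(13 - 4 * t) * X v + (-(98 - 28 * t)) * Y v
      + ((98 - 28 * t) * (3 / 4) + (13 - 4 * t) / 2) := by
    have hμ : 0 ≤ 686 - 196 * t - (12 * t - 2) * (13 - 4 * t) := by nlinarith
    have a1 := mul_nonneg hμ hXv
    have a2 := mul_nonneg (show 0 ≤ 98 - 28 * t by linarith)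
      (show 0 ≤ 7 * t - 7 * X v - (12 * t - 2) * Y v by linarith)
    refine pos_of_mul_pos_right (b := _) (a := 12 * t - 2) ?_ (by linarith)
    nlinarith
  refine sepC hs5 hz (-(13 - 4 * t)) (-(98 - 28 * t))
    ((98 - 28 * t) * (3 / 4) + (13 - 4 * t) / 2)
    (-1/2) (2 - t) (t / 2) (by linarith) (by linarith) ?_ ?_
  · intro n hn0 hpos
    rcases hn n hn0 with rfl | rfl | rfl
    · linarith
    · exact gV
    · rw [hm]; linarith
  · intro n hn0 hpos
    rcases hn n hn0 with rfl | rfl | rfl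
    · exact gU
    · exact gV.le
    · rw [hm]; linarith

theorem mainB {ι : Type*} [Fintype ι] {X Y Z : ι → ℝ} (hX : ∀ i, 0 ≤ X i) (hY : ∀ i, 0 ≤ Y i)
    (hz : ∀ i, 0 ≤ Z i) (c1 : ∀ i, Z i = 0 → Y i = 0 → X i ≤ 1)
    (c2 : ∀ i, Z i = 0 → 2 * X i + 7 * Y i ≤ 8)
    (hs4 : InF X Y Z 2 (1/2)) (hs5 : InF X Y Z (1/2) (3/4)) (hs6 : InF X Y Z (1/6) (7/12))
    (i j m : ι) (hi : 0 < Y i) (hj : 0 < Y j) (hm : Y m = 0) (hmz : Z m = 0)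
    (hn : ∀ n, Z n = 0 → n = i ∨ n = j ∨ n = m) : 0 ≤ X m ^ 2 - 4 * X m + 2 := by
  by_contra! hmm
  have h0 := hX m
  have h1 := c1 m hmz hm
  have h2 : 1/2 < X m := by nlinarith
  have hax : ∀ n, Z n = 0 → Y n = 0 → n = m := by
    intro n hn0 hy
    rcases hn n hn0 with rfl | rfl | h
    · linarith
    · linarith
    · exact h
  have hcon : ∀ n, 0 < Y n → (-1/2) * X n + (2 - X m) * Y n + X m / 2 ≤ 0 →
      (7/12) * X n + (X m - 1/6) * Y n + (-(7/12) * X m) ≤ 0 → False := by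
    intro n hy e1 e3
    nlinarith [mul_pos hy (show 0 < 2 - X m by linarith),
      mul_pos hy (show 0 < X m - 1/6 by linarith)]
  obtain ⟨u, hu, hu1, hu2⟩ := findPt hs4 hz hY (by norm_num) (-1/2) (2 - X m) (X m / 2)
    (by linarith) (fun n h h' => by rw [hax n h h']; linarith)
  obtain ⟨v, hv, hv1, hv2⟩ := findPt hs6 hz hY (by norm_num) (7/12) (X m - 1/6)
    (-(7/12) * X m) (by linarith) (fun n h h' => by rw [hax n h h']; linarith)
  have huv : u ≠ v := by
    rintro rfl
    exact hcon u hu1 hu2 hv2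
  have hum : u ≠ m := by rintro rfl; linarith
  have hvm : v ≠ m := by rintro rfl; linarith
  refine coreB hz hX hs5 u v m hm h2 h1 hmm ?_ (c2 u hu) hu2 hv2
  intro n hn0
  have a := hn n hn0
  have b := hn u hu
  have c := hn v hv
  grind

theorem hullW {ι : Type*} [Fintype ι] (q : ι → Fin 3 → ℝ) (s : Fin 3 → ℝ)
    (h : s ∈ convexHull ℝ (Set.range q)) :
    ∃ w : ι → ℝ, (∀ i, 0 ≤ w i) ∧ ∑ i, w i = 1 ∧ ∀ k, ∑ i, w i * q i k = s k := by
  classical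
  have hsub : convexHull ℝ (Set.range q) ⊆ {s : Fin 3 → ℝ | ∃ w : ι → ℝ, (∀ i, 0 ≤ w i) ∧
      ∑ i, w i = 1 ∧ ∀ k, ∑ i, w i * q i k = s k} := by
    refine convexHull_min ?_ ?_
    · rintro _ ⟨i, rfl⟩
      refine ⟨fun n => if n = i then 1 else 0, ?_, by simp, by simp⟩
      intro n
      dsimp only
      split_ifs <;> norm_num
    · rintro x ⟨v, hv, hv1, hvk⟩ y ⟨w, hw, hw1, hwk⟩ a b ha hb hab
      refine ⟨fun i => a * v i + b * w i, ?_, ?_, ?_⟩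
      · intro i
        exact add_nonneg (mul_nonneg ha (hv i)) (mul_nonneg hb (hw i))
      · rw [Finset.sum_add_distrib, ← Finset.mul_sum, ← Finset.mul_sum, hv1, hw1]
        linarith
      · intro k
        simp_rw [add_mul, mul_assoc, Finset.sum_add_distrib, ← Finset.mul_sum, hvk, hwk]
        simp
  exact hsub h

/-- The structure common to all nested polytopes. -/
theorem struct {ι : Type*} [Fintype ι] (q : ι → Fin 3 → ℝ)
    (hS : innerS ⊆ convexHull ℝ (Set.range q)) (hP : convexHull ℝ (Set.range q) ⊆ outerP) :
    ∃ i j k l : ι, i ≠ j ∧ k ≠ l ∧ i ≠ k ∧ i ≠ l ∧ j ≠ k ∧ j ≠ l ∧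
      ((∀ n, n = i ∨ n = j ∨ n = k ∨ n = l) → False) ∧
      (∀ m, (∀ n, n = i ∨ n = j ∨ n = k ∨ n = l ∨ n = m) → q m = ![2 - Real.sqrt 2, 0, 0]) := by
  have hq : ∀ i, 0 ≤ q i 0 ∧ 0 ≤ q i 1 ∧ 0 ≤ q i 2 ∧
       0 ≤ -q i 0 + (5 / 2) * q i 2 + 1 ∧
       0 ≤ -(1 / 2) * q i 0 - q i 1 + (1 / 4) * q i 2 + 1 ∧
       0 ≤ -(1 / 4) * q i 0 - q i 1 - (7 / 8) * q i 2 + 1 :=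
    fun i => hP (subset_convexHull ℝ _ ⟨i, rfl⟩)
  have hX : ∀ i, 0 ≤ q i 0 := fun i => (hq i).1
  have hY : ∀ i, 0 ≤ q i 1 := fun i => (hq i).2.1
  have hZ : ∀ i, 0 ≤ q i 2 := fun i => (hq i).2.2.1
  have c1 : ∀ i, 0 ≤ -q i 0 + (5 / 2) * q i 2 + 1 := fun i => (hq i).2.2.2.1
  have c2 : ∀ i, 0 ≤ -(1 / 2) * q i 0 - q i 1 + (1 / 4) * q i 2 + 1 := fun i => (hq i).2.2.2.2.1
  have c3 : ∀ i, 0 ≤ -(1 / 4) * q i 0 - q i 1 - (7 / 8) * q i 2 + 1 := fun i => (hq i).2.2.2.2.2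
  unfold innerS at hS
  have hA : ∀ p r : ℝ, (![p, r, 0] : Fin 3 → ℝ) ∈ convexHull ℝ ({![3/4, 1/8, 0], ![3/4, 1/2, 0],
      ![3/11, 17/22, 0], ![2, 0, 1/2], ![1/2, 0, 3/4], ![1/6, 0, 7/12]} : Set (Fin 3 → ℝ)) →
      InF (fun i => q i 0) (fun i => q i 1) (fun i => q i 2) p r := by
    intro p r h
    obtain ⟨w, hw, hw1, hk⟩ := hullW q _ (hS h)
    exact ⟨w, hw, hw1, hk 0, hk 1, hk 2⟩
  have hB : ∀ p r : ℝ, (![p, 0, r] : Fin 3 → ℝ) ∈ convexHull ℝ ({![3/4, 1/8, 0], ![3/4, 1/2, 0],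
      ![3/11, 17/22, 0], ![2, 0, 1/2], ![1/2, 0, 3/4], ![1/6, 0, 7/12]} : Set (Fin 3 → ℝ)) →
      InF (fun i => q i 0) (fun i => q i 2) (fun i => q i 1) p r := by
    intro p r h
    obtain ⟨w, hw, hw1, hk⟩ := hullW q _ (hS h)
    exact ⟨w, hw, hw1, hk 0, hk 2, hk 1⟩
  have s1 := hA (3/4) (1/8) (subset_convexHull ℝ _ (by simp))
  have s2 := hA (3/4) (1/2) (subset_convexHull ℝ _ (by simp))
  have s3 := hA (3/11) (17/22) (subset_convexHull ℝ _ (by simp))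
  have s4 := hB 2 (1/2) (subset_convexHull ℝ _ (by simp))
  have s5 := hB (1/2) (3/4) (subset_convexHull ℝ _ (by simp))
  have s6 := hB (1/6) (7/12) (subset_convexHull ℝ _ (by simp))
  have d1 : ∀ i, q i 2 = 0 → q i 0 ≤ 1 := fun i h => by have := c1 i; rw [h] at this; linarith
  have d2 : ∀ i, q i 2 = 0 → q i 0 / 2 + q i 1 ≤ 1 := fun i h => by
    have := c2 i; rw [h] at this; linarith
  have d3 : ∀ i, q i 1 = 0 → q i 2 = 0 → q i 0 ≤ 1 := fun i _ h => d1 i h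
  have d4 : ∀ i, q i 1 = 0 → 2 * q i 0 + 7 * q i 2 ≤ 8 := fun i h => by
    have := c3 i; rw [h] at this; linarith
  obtain ⟨i, j, hij, hi0, hi1, hj0, hj1⟩ := twoA hX hY hZ d1 d2 s2 s3
  obtain ⟨k, l, hkl, hk0, hk1, hl0, hl1⟩ := twoB hX hZ hY d3 s4 s6
  refine ⟨i, j, k, l, hij, hkl, ?_, ?_, ?_, ?_, ?_, ?_⟩
  · rintro rfl; linarith
  · rintro rfl; linarith
  · rintro rfl; linarith
  · rintro rfl; linarith
  · intro h
    refine third hZ s1 s2 s3 (by norm_num) i j ?_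
    intro n hn
    rcases h n with h | h | rfl | rfl
    · exact Or.inl h
    · exact Or.inr h
    · linarith
    · linarith
  · intro m h
    have hn : ∀ n, q n 2 = 0 → n = i ∨ n = j ∨ n = m := by
      intro n hn
      rcases h n with h | h | rfl | rfl | h
      · exact Or.inl h
      · exact Or.inr (Or.inl h)
      · linarith
      · linarith
      · exact Or.inr (Or.inr h)
    have hn' : ∀ n, q n 1 = 0 → n = k ∨ n = l ∨ n = m := by
      intro n hn
      rcases h n with rfl | rfl | h
      · linarith
      · linarith
      · exact h
    have hm2 : q m 2 = 0 := by
      by_contra hne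
      refine third hZ s1 s2 s3 (by norm_num) i j ?_
      intro n hn0
      rcases hn n hn0 with h | h | rfl
      · exact Or.inl h
      · exact Or.inr h
      · exact absurd hn0 hne
    have hm1 : q m 1 = 0 := by
      by_contra hne
      refine third hY s4 s5 s6 (by norm_num) k l ?_
      intro n hn0
      rcases hn' n hn0 with h | h | rfl
      · exact Or.inl h
      · exact Or.inr h
      · exact absurd hn0 hne
    have e1 := mainA hX hY hZ d1 d2 s1 s2 s3 i j m hi1 hj1 hm1 hm2 hn
    have e2 := mainB hX hZ hY d3 d4 s4 s5 s6 k l m hk1 hl1 hm2 hm1 hn'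
    have e3 := d1 m hm2
    have e4 : Real.sqrt 2 = 2 - q m 0 := by
      rw [Real.sqrt_eq_iff_mul_self_eq (by norm_num) (by linarith)]
      linarith
    funext x
    fin_cases x
    · simp [e4]
    · simpa using hm1
    · simpa using hm2

theorem exists5 : ∃ q : Fin 5 → Fin 3 → ℝ,
      innerS ⊆ convexHull ℝ (Set.range q) ∧ convexHull ℝ (Set.range q) ⊆ outerP := by
  have hr : Real.sqrt 2 ^ 2 = 2 := Real.sq_sqrt (by norm_num)
  have r1 : 1.41 < Real.sqrt 2 := by
    rw [Real.lt_sqrt (by norm_num)]; norm_num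
  have r2 : Real.sqrt 2 < 1.42 := by
    rw [Real.sqrt_lt' (by norm_num)]; norm_num
  generalize Real.sqrt 2 = r at hr r1 r2
  norm_num at r1 r2
  let q : Fin 5 → Fin 3 → ℝ := ![![2 - r, 0, 0], ![1, (3 + r) / 14, 0],
    ![(3 - r) / 7, (11 + r) / 14, 0], ![(26 + 7 * r) / 17, 0, (12 - 2 * r) / 17],
    ![0, 0, (10 + r) / 14]]
  have hc : Convex ℝ (convexHull ℝ (Set.range q)) := convex_convexHull ℝ _
  have hmem : ∀ (i j : Fin 5) (a : ℝ) (s : Fin 3 → ℝ), 0 ≤ a → a ≤ 1 →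
      (1 - a) • q i + a • q j = s → s ∈ convexHull ℝ (Set.range q) := by
    intro i j a s h0 h1 h
    rw [← h]
    exact hc (subset_convexHull ℝ _ ⟨i, rfl⟩) (subset_convexHull ℝ _ ⟨j, rfl⟩) (by linarith) h0
      (by ring)
  have ext3 : ∀ a b : Fin 3 → ℝ, a 0 = b 0 → a 1 = b 1 → a 2 = b 2 → a = b := by
    intro a b h0 h1 h2
    funext x
    fin_cases x <;> assumption
  unfold innerS
  refine ⟨q, convexHull_min ?_ hc, convexHull_min ?_ ?_⟩
  · intro s hs
    simp only [Set.mem_insert_iff, Set.mem_singleton_iff] at hs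
    rcases hs with rfl | rfl | rfl | rfl | rfl | rfl
    · refine hmem 0 1 ((3 - r) / 4) _ (by linarith) (by linarith) (ext3 _ _ ?_ ?_ ?_) <;>
        simp [q] <;> linarith
    · refine hmem 1 2 ((4 - r) / 8) _ (by linarith) (by linarith) (ext3 _ _ ?_ ?_ ?_) <;>
        simp [q] <;> linarith
    · refine hmem 0 2 ((11 - r) / 11) _ (by linarith) (by linarith) (ext3 _ _ ?_ ?_ ?_) <;>
        simp [q] <;> linarith
    · refine hmem 0 3 ((6 + r) / 8) _ (by linarith) (by linarith) (ext3 _ _ ?_ ?_ ?_) <;>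
        simp [q] <;> linarith
    · refine hmem 4 3 ((26 - 7 * r) / 68) _ (by linarith) (by linarith) (ext3 _ _ ?_ ?_ ?_) <;>
        simp [q] <;> linarith
    · refine hmem 0 4 ((10 - r) / 12) _ (by linarith) (by linarith) (ext3 _ _ ?_ ?_ ?_) <;>
        simp [q] <;> linarith
  · rintro _ ⟨i, rfl⟩
    fin_cases i <;> refine ⟨?_, ?_, ?_, ?_, ?_, ?_⟩ <;> simp [q] <;> linarith
  · intro x hx y hy a b ha hb hab
    obtain ⟨h1, h2, h3, h4, h5, h6⟩ := hx
    obtain ⟨g1, g2, g3, g4, g5, g6⟩ := hy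
    have hb' : b = 1 - a := by linarith
    refine ⟨?_, ?_, ?_, ?_, ?_, ?_⟩ <;>
      simp only [Pi.add_apply, Pi.smul_apply, smul_eq_mul]
    · linarith [mul_nonneg ha h1, mul_nonneg hb g1]
    · linarith [mul_nonneg ha h2, mul_nonneg hb g2]
    · linarith [mul_nonneg ha h3, mul_nonneg hb g3]
    · linarith [mul_nonneg ha h4, mul_nonneg hb g4]
    · linarith [mul_nonneg ha h5, mul_nonneg hb g5]
    · linarith [mul_nonneg ha h6, mul_nonneg hb g6]

theorem part2 (q : Fin 5 → Fin 3 → ℝ)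
    (hS : innerS ⊆ convexHull ℝ (Set.range q)) (hP : convexHull ℝ (Set.range q) ⊆ outerP) :
    ∃ i, q i = ![2 - Real.sqrt 2, 0, 0] := by
  obtain ⟨i, j, k, l, h1, h2, h3, h4, h5, h6, -, h⟩ := struct q hS hP
  have : ∀ i j k l : Fin 5, i ≠ j → k ≠ l → i ≠ k → i ≠ l → j ≠ k → j ≠ l →
      ∃ m, ∀ n, n = i ∨ n = j ∨ n = k ∨ n = l ∨ n = m := by decide +kernel
  obtain ⟨m, hm⟩ := this i j k l h1 h2 h3 h4 h5 h6
  exact ⟨m, h m hm⟩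

/-- (i) There are five points spanning a polytope nested between `P` and `S`;
(ii) in any such choice of five points, one of them equals `(2 − √2, 0, 0)`;
in particular no five rational points span a polytope nested between `P` and `S`;
(iii) no four points span a polytope nested between `P` and `S`. -/
theorem stmt17 :
    (∃ q : Fin 5 → Fin 3 → ℝ,
      innerS ⊆ convexHull ℝ (Set.range q) ∧ convexHull ℝ (Set.range q) ⊆ outerP) ∧
    (∀ q : Fin 5 → Fin 3 → ℝ,
      innerS ⊆ convexHull ℝ (Set.range q) → convexHull ℝ (Set.range q) ⊆ outerP →
        ∃ i, q i = ![2 - Real.sqrt 2, 0, 0]) ∧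
    (¬ ∃ q : Fin 5 → Fin 3 → ℚ,
      innerS ⊆ convexHull ℝ (Set.range fun i => fun x => ((q i x : ℝ))) ∧
      convexHull ℝ (Set.range fun i => fun x => ((q i x : ℝ))) ⊆ outerP) ∧
    (¬ ∃ q : Fin 4 → Fin 3 → ℝ,
      innerS ⊆ convexHull ℝ (Set.range q) ∧ convexHull ℝ (Set.range q) ⊆ outerP) := by
  refine ⟨exists5, part2, ?_, ?_⟩
  · rintro ⟨q, hS, hP⟩
    obtain ⟨i, hi⟩ := part2 _ hS hP
    have h0 := congrFun hi 0
    simp only [Matrix.cons_val_zero] at h0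
    refine irrational_sqrt_two ⟨2 - q i 0, ?_⟩
    push_cast
    linarith
  · rintro ⟨q, hS, hP⟩
    obtain ⟨i, j, k, l, h1, h2, h3, h4, h5, h6, h, -⟩ := struct q hS hP
    apply h
    clear h
    revert i j k l
    decide +kernel
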